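/- Let X be a T×p real matrix, β ∈ ℝ^p, ε ∈ ℝ^T, and Y = Xβ + ε. Let 1 ≤ s ≤ 2 and λ ≥ 0, and let β̂ be a minimizer over ℝ^p of the map b ↦ (1/T)·‖Y − Xb‖₂² + λ·‖b‖_s. If ‖(2/T)·Xᵀε‖₂ ≤ λ, then (1/T)·‖X(β̂ − β)‖₂² ≤ 2λ·‖β‖_s. -/

import Mathlib

/-!
Put `d = β̂ - β`. Comparing the objective at `β̂` with its value at `β` and expanding
`‖ε - X d‖₂²` gives
`(1/T) ‖X d‖₂² ≤ ⟨(2/T) Xᵀ ε, d⟩ + λ ‖β‖_s - λ ‖β̂‖_s`.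
By Cauchy-Schwarz and the assumption on `Xᵀ ε`, the inner product is at most
`λ ‖d‖₂ ≤ λ (‖β̂‖₂ + ‖β‖₂)`, and `‖·‖₂ ≤ ‖·‖_s` (`euclNorm_le_lsNorm`) makes the `β̂` terms cancel.
Passing to `ℓ_s` only after the triangle inequality means that Minkowski's inequality is needed
in `ℓ₂` alone.
-/

open Matrix

/-- The Euclidean norm on `Fin n → ℝ`. -/
noncomputable def euclNorm {n : ℕ} (v : Fin n → ℝ) : ℝ :=
  ‖(EuclideanSpace.equiv (Fin n) ℝ).symm v‖

/-- The `ℓ_s`-norm on `Fin n → ℝ`. -/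
noncomputable def lsNorm {n : ℕ} (s : ℝ) (v : Fin n → ℝ) : ℝ :=
  (∑ j, |v j| ^ s) ^ (1 / s)

lemma euclNorm_nonneg {n : ℕ} (v : Fin n → ℝ) : 0 ≤ euclNorm v := norm_nonneg _

lemma euclNorm_sq {n : ℕ} (v : Fin n → ℝ) : euclNorm v ^ 2 = v ⬝ᵥ v := by
  rw [euclNorm, EuclideanSpace.norm_sq_eq]
  simp [dotProduct, pow_two]

lemma dotProduct_le_euclNorm {n : ℕ} (v w : Fin n → ℝ) :
    v ⬝ᵥ w ≤ euclNorm v * euclNorm w := by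
  have h := real_inner_le_norm ((EuclideanSpace.equiv (Fin n) ℝ).symm v)
    ((EuclideanSpace.equiv (Fin n) ℝ).symm w)
  have e : inner ℝ ((EuclideanSpace.equiv (Fin n) ℝ).symm v)
      ((EuclideanSpace.equiv (Fin n) ℝ).symm w) = v ⬝ᵥ w := by
    simp [PiLp.inner_apply, dotProduct, mul_comm]
  rwa [e] at h

lemma euclNorm_sub_le {n : ℕ} (v w : Fin n → ℝ) :
    euclNorm (v - w) ≤ euclNorm v + euclNorm w := by
  unfold euclNorm
  rw [map_sub]
  exact norm_sub_le _ _

/-- With `N = ‖v‖_s`, each `|v j| ≤ N`, so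
`∑ |v j|² = ∑ |v j|^s |v j|^(2-s) ≤ N^s N^(2-s) = N²`. -/
lemma euclNorm_le_lsNorm {n : ℕ} {s : ℝ} (hs1 : 1 ≤ s) (hs2 : s ≤ 2) (v : Fin n → ℝ) :
    euclNorm v ≤ lsNorm s v := by
  have hs : 0 < s := by linarith
  have hS : 0 ≤ ∑ j, |v j| ^ s := Finset.sum_nonneg fun j _ => by positivity
  have hN : 0 ≤ lsNorm s v := Real.rpow_nonneg hS _
  have hNs : lsNorm s v ^ s = ∑ j, |v j| ^ s := by
    unfold lsNorm
    rw [← Real.rpow_mul hS, one_div, inv_mul_cancel₀ hs.ne', Real.rpow_one]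
  have hle (j : Fin n) : |v j| ≤ lsNorm s v := by
    rw [← Real.rpow_le_rpow_iff (abs_nonneg _) hN hs, hNs]
    exact Finset.single_le_sum (f := fun j => |v j| ^ s)
      (fun i _ => by positivity) (Finset.mem_univ j)
  -- The exponents `s` and `2 - s` are nonnegative, so the splitting is valid also at base `0`.
  have split (a : ℝ) (ha : 0 ≤ a) : a ^ s * a ^ (2 - s) = a ^ 2 := by
    rw [← Real.rpow_add_of_nonneg ha hs.le (by linarith), ← Real.rpow_natCast]
    congr 1
    push_cast
    ring
  refine (sq_le_sq₀ (euclNorm_nonneg v) hN).mp ?_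
  calc euclNorm v ^ 2 = ∑ j, |v j| ^ s * |v j| ^ (2 - s) := by
        rw [euclNorm_sq]
        refine Finset.sum_congr rfl fun j _ => ?_
        rw [split _ (abs_nonneg _), sq_abs, pow_two]
    _ ≤ ∑ j, |v j| ^ s * lsNorm s v ^ (2 - s) := by
        gcongr with j
        exact hle j
    _ = lsNorm s v ^ 2 := by rw [← Finset.sum_mul, ← hNs, split _ hN]

/-- Deterministic basic inequality for the `ℓ_s`-penalized least squares
estimator: if `‖(2/T)·Xᵀε‖₂ ≤ λ` then `(1/T)·‖X(β̂ − β)‖₂² ≤ 2λ·‖β‖_s`. -/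
theorem penalized_ls_basic_inequality
    (T p : ℕ) (X : Matrix (Fin T) (Fin p) ℝ)
    (β : Fin p → ℝ) (ε : Fin T → ℝ) (Y : Fin T → ℝ)
    (hY : Y = X.mulVec β + ε)
    (s : ℝ) (hs1 : 1 ≤ s) (hs2 : s ≤ 2)
    (lam : ℝ) (hlam : 0 ≤ lam)
    (βhat : Fin p → ℝ)
    (hmin : ∀ b : Fin p → ℝ,
      (1 / (T : ℝ)) * euclNorm (Y - X.mulVec βhat) ^ 2 + lam * lsNorm s βhat
        ≤ (1 / (T : ℝ)) * euclNorm (Y - X.mulVec b) ^ 2 + lam * lsNorm s b)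
    (hcross : euclNorm ((2 / (T : ℝ)) • Xᵀ.mulVec ε) ≤ lam) :
    (1 / (T : ℝ)) * euclNorm (X.mulVec (βhat - β)) ^ 2 ≤ 2 * lam * lsNorm s β := by
  have h := hmin β
  have e1 : Y - X.mulVec βhat = ε - X.mulVec (βhat - β) := by
    rw [hY, mulVec_sub]
    abel
  have e2 : Y - X.mulVec β = ε := by
    rw [hY]
    abel
  have e3 : euclNorm (ε - X.mulVec (βhat - β)) ^ 2 = euclNorm ε ^ 2
      - 2 * (ε ⬝ᵥ X.mulVec (βhat - β)) + euclNorm (X.mulVec (βhat - β)) ^ 2 := by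
    simp only [euclNorm_sq, sub_dotProduct, dotProduct_sub]
    rw [dotProduct_comm (X.mulVec (βhat - β)) ε]
    ring
  rw [e1, e2, e3] at h
  have e4 : ((2 / (T : ℝ)) • Xᵀ.mulVec ε) ⬝ᵥ (βhat - β)
      = 1 / (T : ℝ) * (2 * (ε ⬝ᵥ X.mulVec (βhat - β))) := by
    rw [smul_dotProduct, mulVec_transpose, ← dotProduct_mulVec, smul_eq_mul]
    ring
  have h1 := dotProduct_le_euclNorm ((2 / (T : ℝ)) • Xᵀ.mulVec ε) (βhat - β)
  rw [e4] at h1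
  have h2 : euclNorm (βhat - β) ≤ lsNorm s βhat + lsNorm s β :=
    (euclNorm_sub_le _ _).trans
      (add_le_add (euclNorm_le_lsNorm hs1 hs2 _) (euclNorm_le_lsNorm hs1 hs2 _))
  have h3 := mul_le_mul hcross h2 (euclNorm_nonneg _) hlam
  linarith
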